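/- Let σ = (r_1,...,r_k) be a composition of a positive integer n with partial sums s_i. For every m ∈ ℕ, the number of points (a_1,...,a_n) ∈ ℕ^n with a_1 + ... + a_{s_i} ≤ m·s_i for all i ∈ {1,...,k} equals Σ_{(κ_1,...,κ_n) ∈ K_σ} C(m+κ_1, κ_1) · C(m+κ_2−1, κ_2) · ... · C(m+κ_n−1, κ_n), where K_σ is the set of tuples (κ_1,...,κ_n) ∈ ℕ^n with κ_1 + ... + κ_n = n and κ_1 + ... + κ_{s_i} ≥ s_i for every i ∈ {1,...,k}, and C(a,b) denotes the binomial coefficient. -/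

import Mathlib

open Finset Polynomial

/-- `pSum σ i = r₁ + ⋯ + rᵢ`, the `i`-th partial sum of the composition `σ`. -/
def pSum (σ : List ℕ) (i : ℕ) : ℕ := (σ.take i).sum

/-- Membership in the set `P_σ ⊆ ℕⁿ`: the partial sum of the first `s_i`
coordinates is at most `s_i` for every `i ∈ [k]`. -/
def memP (n : ℕ) (σ : List ℕ) (a : Fin n → ℕ) : Prop :=
  ∀ i, 1 ≤ i → i ≤ σ.length →
    (∑ j ∈ Finset.univ.filter (fun j : Fin n => (j : ℕ) < pSum σ i), a j) ≤ pSum σ i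

/-- The number of nonzero coordinates of a tuple. -/
def nonzeroCount {n : ℕ} (a : Fin n → ℕ) : ℕ :=
  (Finset.univ.filter (fun j => a j ≠ 0)).card

/-- `h_i(σ)`: the number of points of `P_σ` with exactly `i` nonzero coordinates. -/
noncomputable def hVec (n : ℕ) (σ : List ℕ) (i : ℕ) : ℕ :=
  {a : Fin n → ℕ | memP n σ a ∧ nonzeroCount a = i}.ncard

/-- The number of lattice points of the `m`-th dilate of the composition
polytope `Q_σ`, i.e. the Ehrhart polynomial of `Q_σ` evaluated at `m`. -/
noncomputable def ehrCount (n : ℕ) (σ : List ℕ) (m : ℕ) : ℕ :=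
  {a : Fin n → ℕ | ∀ i, 1 ≤ i → i ≤ σ.length →
    (∑ j ∈ Finset.univ.filter (fun j : Fin n => (j : ℕ) < pSum σ i), a j)
      ≤ m * pSum σ i}.ncard

/-!
Read a tuple `a` of length `n` as a lattice path with `n` vertical steps, the horizontal advance
before the `i`-th of them being `a i`. A bound `a₁ + ⋯ + a_s < V` says that the first `s` vertical
steps occur in the first `V` columns, that is, that these columns together contain at least `s`
vertical steps. Recording the path by the number of vertical steps in each column therefore turns
all upper bounds on `a` into lower bounds on partial sums of the column counts.

The bound `a₁ + ⋯ + a_s ≤ m * s` involves the first `m * s + 1` columns. Cut the columns into `n`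
blocks, the first of width `m + 1` and the others of width `m`: the bounds then depend only on the
number `κ j` of vertical steps in each block, and by stars and bars a block of width `w` can
accommodate its `κ j` steps in `w.multichoose (κ j)` ways.
-/

section PrefixSum

variable {n : ℕ}

/-- The sum of the first `s` entries of a tuple; for `s ≥ n` it is the sum of all entries. -/
def prefixSum {M : Type*} [AddCommMonoid M] (a : Fin n → M) (s : ℕ) : M :=
  ∑ j with j.val < s, a j

lemma prefixSum_zero {M : Type*} [AddCommMonoid M] (a : Fin n → M) : prefixSum a 0 = 0 := by
  simp [prefixSum]

lemma prefixSum_of_le {M : Type*} [AddCommMonoid M] (a : Fin n → M) {s : ℕ} (h : n ≤ s) :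
    prefixSum a s = ∑ j, a j := by
  rw [prefixSum, filter_true_of_mem fun j _ ↦ j.2.trans_le h]

lemma prefixSum_succ {M : Type*} [AddCommMonoid M] (a : Fin n → M) (j : Fin n) :
    prefixSum a (j + 1) = prefixSum a j + a j := by
  have h : univ.filter (fun i : Fin n ↦ i.val < j + 1) =
      insert j (univ.filter (·.val < j.val)) := by grind
  rw [prefixSum, h, sum_insert (by simp), add_comm, prefixSum]

lemma prefixSum_eq_sum_castLE {M : Type*} [AddCommMonoid M] (a : Fin n → M) {s : ℕ} (hs : s ≤ n) :
    prefixSum a s = ∑ i : Fin s, a (Fin.castLE hs i) := by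
  induction s with
  | zero => rw [prefixSum_zero, Fin.sum_univ_zero]
  | succ s ih =>
    rw [prefixSum_succ a ⟨s, hs⟩, ih (Nat.le_of_succ_le hs), Fin.sum_univ_castSucc]
    rfl

lemma prefixSum_comp_val {M : Type*} [AddCommMonoid M] (g : ℕ → M) {s : ℕ} (hs : s ≤ n) :
    prefixSum (fun j : Fin n ↦ g j) s = ∑ k ∈ range s, g k :=
  (prefixSum_eq_sum_castLE _ hs).trans (sum_range g).symm

lemma prefixSum_mono (a : Fin n → ℕ) : Monotone (prefixSum a) := fun _ _ h ↦
  sum_le_sum_of_subset <| monotone_filter_right _ fun _ _ hi ↦ hi.trans_le h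

lemma prefixSum_le_sum (a : Fin n → ℕ) (s : ℕ) : prefixSum a s ≤ ∑ j, a j :=
  sum_le_sum_of_subset (filter_subset _ _)

lemma eq_of_prefixSum_eq {M : Type*} [AddCancelCommMonoid M] {a a' : Fin n → M}
    (h : ∀ s ≤ n, prefixSum a s = prefixSum a' s) : a = a' := by
  funext j
  have hj := h (j + 1) j.2
  rwa [prefixSum_succ, prefixSum_succ, h j j.2.le, add_right_inj] at hj

lemma exists_prefixSum_eq {B : ℕ → ℕ} (hB : Monotone B) (hB_zero : B 0 = 0) :
    ∃ a : Fin n → ℕ, ∀ s ≤ n, prefixSum a s = B s :=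
  ⟨fun j ↦ B (j + 1) - B j, fun s hs ↦ by
    rw [prefixSum_comp_val (fun k ↦ B (k + 1) - B k) hs, sum_range_tsub hB, hB_zero, tsub_zero]⟩

lemma exists_prefixSum_succ_eq {b : Fin n → ℕ} (hb : Monotone b) :
    ∃ a : Fin n → ℕ, ∀ i : Fin n, prefixSum a (i + 1) = b i := by
  let B (s : ℕ) : ℕ := ({i | i.val < s} : Finset (Fin n)).sup b
  have hB_mono : Monotone B := fun _ _ h ↦
    sup_mono <| monotone_filter_right _ fun _ _ hi ↦ hi.trans_le h
  have hB_succ (i : Fin n) : B (i + 1) = b i := le_antisymm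
    (Finset.sup_le fun j hj ↦ hb <| Fin.le_def.2 <| Nat.lt_succ_iff.1 (mem_filter.1 hj).2)
    (le_sup (by simp))
  obtain ⟨a, ha⟩ := exists_prefixSum_eq (n := n) hB_mono (by simp [B])
  exact ⟨a, fun i ↦ (ha _ i.2).trans (hB_succ i)⟩

end PrefixSum

lemma exists_monotone_card_fiber_eq {n : ℕ} {α : Type*} [LinearOrder α] [Fintype α] (c : α → ℕ)
    (hc : ∑ u, c u = n) : ∃ b : Fin n → α, Monotone b ∧ ∀ u, #{i | b i = u} = c u := by
  obtain ⟨e⟩ : Nonempty (Fin n ≃ Σ u, Fin (c u)) := ⟨Fintype.equivOfCardEq (by simp [hc])⟩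
  let f (i : Fin n) : α := (e i).1
  refine ⟨f ∘ Tuple.sort f, Tuple.monotone_sort f, fun u ↦ ?_⟩
  calc #{i | (f ∘ Tuple.sort f) i = u}
      = #{p : Σ u, Fin (c u) | p.1 = u} := card_equiv ((Tuple.sort f).trans e) (by simp [f])
    _ = Fintype.card (Fin (c u)) := by
      rw [← Fintype.card_subtype]
      exact Fintype.card_congr (Equiv.sigmaSubtype u)
    _ = c u := Fintype.card_fin _

section Conjugate

variable {n N s t : ℕ}

/-- A tuple `a` encodes the lattice path whose `i`-th vertical step has abscissa
`prefixSum a (i + 1)`. The conjugate tuple counts the vertical steps at each abscissa `u < N`,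
i.e. it encodes the same path read column by column. -/
def conjugate (N : ℕ) (a : Fin n → ℕ) (u : Fin N) : ℕ :=
  #{i : Fin n | prefixSum a (i + 1) = u}

lemma prefixSum_conjugate (a : Fin n → ℕ) (ht : t ≤ N) :
    prefixSum (conjugate N a) t = #{i : Fin n | prefixSum a (i + 1) < t} := by
  rw [show conjugate N a = fun u : Fin N ↦ #{i : Fin n | prefixSum a (i + 1) = u} from rfl,
    prefixSum_comp_val (fun k ↦ #{i : Fin n | prefixSum a (i + 1) = k}) ht,
    sum_card_fiberwise_eq_card_filter]
  simp only [mem_range]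

lemma prefixSum_lt_iff_le_prefixSum_conjugate (a : Fin n → ℕ) (hs : 0 < s) (hsn : s ≤ n)
    (ht : t ≤ N) : prefixSum a s < t ↔ s ≤ prefixSum (conjugate N a) t := by
  obtain ⟨s, rfl⟩ := Nat.exists_eq_add_of_le' hs
  have hmono : Monotone fun i : Fin n ↦ prefixSum a (i + 1) :=
    (prefixSum_mono a).comp fun _ _ h ↦ Nat.succ_le_succ h
  rw [prefixSum_conjugate a ht, Nat.succ_le_iff]
  exact (Tuple.lt_card_lt_iff_apply_lt_of_monotone (j := ⟨s, hsn⟩) hmono).symm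

lemma mapsTo_conjugate :
    Set.MapsTo (conjugate N) {a : Fin n → ℕ | ∑ j, a j < N} {c | ∑ u, c u = n} := by
  intro a ha
  calc ∑ u, conjugate N a u
      = prefixSum (conjugate N a) N := (prefixSum_of_le _ le_rfl).symm
    _ = #{i : Fin n | prefixSum a (i + 1) < N} := prefixSum_conjugate a le_rfl
    _ = n := by
      rw [filter_true_of_mem fun _ _ ↦ (prefixSum_le_sum a _).trans_lt ha, card_univ,
        Fintype.card_fin]

lemma injOn_conjugate : Set.InjOn (conjugate N) {a : Fin n → ℕ | ∑ j, a j < N} := by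
  intro a ha a' ha' h
  have lt_iff {s t : ℕ} (hs : 0 < s) (hsn : s ≤ n) (ht : t ≤ N) :
      prefixSum a s < t ↔ prefixSum a' s < t := by
    rw [prefixSum_lt_iff_le_prefixSum_conjugate a hs hsn ht, h,
      prefixSum_lt_iff_le_prefixSum_conjugate a' hs hsn ht]
  refine eq_of_prefixSum_eq fun s hsn ↦ ?_
  obtain rfl | hs := s.eq_zero_or_pos
  · rw [prefixSum_zero, prefixSum_zero]
  · refine le_antisymm (Nat.lt_succ_iff.1 ?_) (Nat.lt_succ_iff.1 ?_)
    · exact (lt_iff hs hsn ((prefixSum_le_sum a' s).trans_lt ha')).2 (Nat.lt_succ_self _)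
    · exact (lt_iff hs hsn ((prefixSum_le_sum a s).trans_lt ha)).1 (Nat.lt_succ_self _)

lemma surjOn_conjugate (hn : 0 < n) :
    Set.SurjOn (conjugate N) {a : Fin n → ℕ | ∑ j, a j < N} {c | ∑ u, c u = n} := by
  intro c hc
  obtain ⟨b, hb, hbc⟩ := exists_monotone_card_fiber_eq c hc
  obtain ⟨a, ha⟩ := exists_prefixSum_succ_eq (b := fun i ↦ (b i : ℕ)) hb
  refine ⟨a, ?_, ?_⟩
  · obtain ⟨n, rfl⟩ := Nat.exists_eq_add_of_le' hn
    have := ha (Fin.last n)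
    rw [Fin.val_last, prefixSum_of_le a le_rfl] at this
    exact this.trans_lt (b _).2
  · funext u
    simp [conjugate, ha, ← hbc u, Fin.ext_iff]

lemma bijOn_conjugate (hn : 0 < n) :
    Set.BijOn (conjugate N) {a : Fin n → ℕ | ∑ j, a j < N} {c | ∑ u, c u = n} :=
  ⟨mapsTo_conjugate, injOn_conjugate, surjOn_conjugate hn⟩

end Conjugate

lemma card_piAntidiag_univ {ι : Type*} [Fintype ι] [DecidableEq ι] (k : ℕ) :
    #(piAntidiag (univ : Finset ι) k) = (Fintype.card ι).multichoose k := by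
  rw [← map_sym_eq_piAntidiag, card_map, sym_univ, card_univ, Sym.card_sym_eq_multichoose]

lemma ncard_sigma_fiberSum_mem {ι : Type*} [Fintype ι] {β : ι → Type*} [∀ j, Fintype (β j)]
    (K : Finset (ι → ℕ)) :
    {c : (Σ j, β j) → ℕ | (fun j ↦ ∑ x, c ⟨j, x⟩) ∈ K}.ncard =
      ∑ κ ∈ K, ∏ j, (Fintype.card (β j)).multichoose (κ j) := by
  classical
  let F (κ : ι → ℕ) : Finset (∀ j, β j → ℕ) := Fintype.piFinset fun j ↦ piAntidiag univ (κ j)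
  have mem_F (κ : ι → ℕ) (d : ∀ j, β j → ℕ) : d ∈ F κ ↔ (fun j ↦ ∑ x, d j x) = κ := by
    simp [F, funext_iff]
  have hF : (K : Set (ι → ℕ)).PairwiseDisjoint F := fun κ _ κ' _ hne ↦
    disjoint_left.2 fun d hd hd' ↦ hne <| ((mem_F κ d).1 hd).symm.trans ((mem_F κ' d).1 hd')
  calc {c : (Σ j, β j) → ℕ | (fun j ↦ ∑ x, c ⟨j, x⟩) ∈ K}.ncard
      = (K.biUnion F : Set (∀ j, β j → ℕ)).ncard :=
        Set.ncard_congr' <| (Equiv.piCurry fun _ _ ↦ ℕ).subtypeEquiv fun c ↦ by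
          simp [mem_F, Sigma.curry]
    _ = ∑ κ ∈ K, #(F κ) := by rw [Set.ncard_coe_finset, card_biUnion hF]
    _ = ∑ κ ∈ K, ∏ j, (Fintype.card (β j)).multichoose (κ j) := by
      simp only [F, Fintype.card_piFinset, card_piAntidiag_univ]

lemma finSigmaFinEquiv_eq_prefixSum_add {n : ℕ} {v : Fin n → ℕ} (p : Σ j, Fin (v j)) :
    (finSigmaFinEquiv p : ℕ) = prefixSum v p.1 + p.2 := by
  rw [finSigmaFinEquiv_apply, prefixSum_eq_sum_castLE v p.1.2.le]

lemma finSigmaFinEquiv_lt_prefixSum_iff {n : ℕ} {v : Fin n → ℕ} (p : Σ j, Fin (v j)) (s : ℕ) :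
    (finSigmaFinEquiv p : ℕ) < prefixSum v s ↔ (p.1 : ℕ) < s := by
  rw [finSigmaFinEquiv_eq_prefixSum_add]
  refine ⟨fun h ↦ ?_, fun h ↦ ?_⟩
  · by_contra! hs
    exact absurd (prefixSum_mono v hs) (by lia)
  · calc prefixSum v p.1 + p.2 < prefixSum v p.1 + v p.1 := by gcongr; exact p.2.2
      _ = prefixSum v (p.1 + 1) := (prefixSum_succ v p.1).symm
      _ ≤ prefixSum v s := prefixSum_mono v h

lemma prefixSum_prefixSum {n : ℕ} {M : Type*} [AddCommMonoid M] (v : Fin n → ℕ)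
    (c : Fin (∑ j, v j) → M) (s : ℕ) :
    prefixSum c (prefixSum v s) = prefixSum (fun j ↦ ∑ x, c (finSigmaFinEquiv ⟨j, x⟩)) s := by
  calc prefixSum c (prefixSum v s)
      = ∑ p : Σ j, Fin (v j) with (finSigmaFinEquiv p).val < prefixSum v s,
          c (finSigmaFinEquiv p) :=
        (sum_equiv finSigmaFinEquiv (by simp) fun _ _ ↦ rfl).symm
    _ = ∑ p : Σ j, Fin (v j) with p.1.val < s, c (finSigmaFinEquiv p) := by
      simp_rw [finSigmaFinEquiv_lt_prefixSum_iff]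
    _ = prefixSum (fun j ↦ ∑ x, c (finSigmaFinEquiv ⟨j, x⟩)) s := by
      rw [prefixSum, sum_sigma']
      exact sum_congr (by grind) fun _ _ ↦ rfl

section PitmanStanley

variable {n : ℕ} {S : Finset ℕ}

lemma bijOn_conjugate_prefixSum_lt (hS : S ⊆ Icc 1 n) (hnS : n ∈ S) (v : Fin n → ℕ) :
    Set.BijOn (conjugate (∑ j, v j)) {a : Fin n → ℕ | ∀ s ∈ S, prefixSum a s < prefixSum v s}
      {c | ∑ u, c u = n ∧ ∀ s ∈ S, s ≤ prefixSum c (prefixSum v s)} := by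
  have constraint_iff (a : Fin n → ℕ) {s : ℕ} (hs : s ∈ S) : prefixSum a s < prefixSum v s ↔
      s ≤ prefixSum (conjugate (∑ j, v j) a) (prefixSum v s) :=
    have hs' := mem_Icc.1 (hS hs)
    prefixSum_lt_iff_le_prefixSum_conjugate a hs'.1 hs'.2 (prefixSum_le_sum v s)
  have domain_eq : {a : Fin n → ℕ | ∀ s ∈ S, prefixSum a s < prefixSum v s} =
      {a | ∑ j, a j < ∑ j, v j} ∩ conjugate (∑ j, v j) ⁻¹'
        {c | ∑ u, c u = n ∧ ∀ s ∈ S, s ≤ prefixSum c (prefixSum v s)} := by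
    ext a
    refine ⟨fun ha ↦ ?_, fun ha s hs ↦ (constraint_iff a hs).2 (ha.2.2 s hs)⟩
    have total_lt : ∑ j, a j < ∑ j, v j := by
      simpa only [prefixSum_of_le _ le_rfl] using ha n hnS
    exact ⟨total_lt, mapsTo_conjugate total_lt, fun s hs ↦ (constraint_iff a hs).1 (ha s hs)⟩
  rw [domain_eq]
  exact (bijOn_conjugate (mem_Icc.1 (hS hnS)).1).subset_right fun _ hc ↦ hc.1

/-- The Pitman–Stanley formula: `v j` is the number of columns of the `j`-th block, and `κ j` the
number of vertical steps of the lattice path in that block. -/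
theorem ncard_prefixSum_lt_prefixSum (hS : S ⊆ Icc 1 n) (hnS : n ∈ S) (v : Fin n → ℕ) :
    {a : Fin n → ℕ | ∀ s ∈ S, prefixSum a s < prefixSum v s}.ncard =
      ∑ κ ∈ piAntidiag univ n with ∀ s ∈ S, s ≤ prefixSum κ s,
        ∏ j, (v j).multichoose (κ j) := by
  set K : Finset (Fin n → ℕ) := {κ ∈ piAntidiag univ n | ∀ s ∈ S, s ≤ prefixSum κ s}
  calc {a : Fin n → ℕ | ∀ s ∈ S, prefixSum a s < prefixSum v s}.ncard
      = {c : Fin (∑ j, v j) → ℕ |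
          ∑ u, c u = n ∧ ∀ s ∈ S, s ≤ prefixSum c (prefixSum v s)}.ncard :=
        (bijOn_conjugate_prefixSum_lt hS hnS v).ncard_eq
    _ = {c : (Σ j, Fin (v j)) → ℕ | (fun j ↦ ∑ x, c ⟨j, x⟩) ∈ K}.ncard :=
        Set.ncard_congr' <| (finSigmaFinEquiv.symm.arrowCongr (Equiv.refl ℕ)).subtypeEquiv
          fun c ↦ by
            have total_eq : ∑ u, c u = ∑ j, ∑ x, c (finSigmaFinEquiv ⟨j, x⟩) := by
              rw [← finSigmaFinEquiv.sum_comp, Fintype.sum_sigma]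
            simp [K, total_eq, prefixSum_prefixSum]
    _ = ∑ κ ∈ K, ∏ j, (v j).multichoose (κ j) := by
      simp only [ncard_sigma_fiberSum_mem, Fintype.card_fin]

end PitmanStanley

lemma prefixSum_ite_zero {n s : ℕ} (m : ℕ) (hs : 0 < s) (hsn : s ≤ n) :
    prefixSum (fun j : Fin n ↦ if j.val = 0 then m + 1 else m) s = m * s + 1 := by
  obtain ⟨s, rfl⟩ := Nat.exists_eq_add_of_le' hs
  rw [prefixSum_comp_val (fun k ↦ if k = 0 then m + 1 else m) hsn, sum_range_succ']
  simp only [Nat.add_eq_zero_iff, one_ne_zero, and_false, if_false, if_true, sum_const, card_range,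
    smul_eq_mul]
  ring

section Composition

variable {n : ℕ} {σ : List ℕ}

/-- The set `{s₁, …, s_k}` of partial sums of the composition `σ`. -/
def partialSums (σ : List ℕ) : Finset ℕ := (Icc 1 σ.length).image (pSum σ)

lemma forall_mem_partialSums {p : ℕ → Prop} :
    (∀ s ∈ partialSums σ, p s) ↔ ∀ i, 1 ≤ i → i ≤ σ.length → p (pSum σ i) := by
  simp only [partialSums, forall_mem_image, mem_Icc, and_imp]

lemma sum_mem_partialSums (h : 0 < σ.sum) : σ.sum ∈ partialSums σ :=
  mem_image.2 ⟨σ.length, right_mem_Icc.2 (List.length_pos_of_sum_pos σ h),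
    by rw [pSum, List.take_length]⟩

lemma partialSums_subset_Icc (hpos : ∀ r ∈ σ, 0 < r) : partialSums σ ⊆ Icc 1 σ.sum :=
  forall_mem_partialSums.2 fun i hi hiσ ↦ mem_Icc.2
    ⟨List.sum_pos _ (fun _ hr ↦ hpos _ (List.mem_of_mem_take hr))
        (List.ne_nil_of_length_pos (by rw [List.length_take]; lia)),
      (List.take_sublist i σ).sum_le_sum fun _ _ ↦ Nat.zero_le _⟩

lemma ehrCount_eq_ncard_prefixSum_lt (hS : partialSums σ ⊆ Icc 1 n) (m : ℕ) :
    ehrCount n σ m = {a : Fin n → ℕ | ∀ s ∈ partialSums σ,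
      prefixSum a s < prefixSum (fun j : Fin n ↦ if j.val = 0 then m + 1 else m) s}.ncard := by
  have constraint_iff (a : Fin n → ℕ) {s : ℕ} (hs : s ∈ partialSums σ) :
      prefixSum a s < prefixSum (fun j : Fin n ↦ if j.val = 0 then m + 1 else m) s ↔
        prefixSum a s ≤ m * s := by
    have hs' := mem_Icc.1 (hS hs)
    rw [prefixSum_ite_zero m hs'.1 hs'.2, Nat.lt_succ_iff]
  refine congrArg Set.ncard (Set.ext fun a ↦ ?_)
  calc (∀ i, 1 ≤ i → i ≤ σ.length → prefixSum a (pSum σ i) ≤ m * pSum σ i)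
      ↔ ∀ s ∈ partialSums σ, prefixSum a s ≤ m * s :=
        (forall_mem_partialSums (p := fun s ↦ prefixSum a s ≤ m * s)).symm
    _ ↔ ∀ s ∈ partialSums σ, prefixSum a s <
          prefixSum (fun j : Fin n ↦ if j.val = 0 then m + 1 else m) s :=
      forall₂_congr fun _ hs ↦ (constraint_iff a hs).symm

end Composition

open scoped Classical in
/-- The Pitman–Stanley style formula for the Ehrhart polynomial of `Q_σ`:
a sum of products of binomial coefficients over the set `K_σ`. -/
theorem ehrhart_eq_sum_binomials (n : ℕ) (hn : 0 < n) (σ : List ℕ)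
    (hpos : ∀ r ∈ σ, 0 < r) (hsum : σ.sum = n) (m : ℕ) :
    ehrCount n σ m =
      ∑ κ ∈ (Fintype.piFinset fun _ : Fin n => Finset.range (n + 1)).filter
          (fun κ : Fin n → ℕ => (∑ j, κ j) = n ∧ ∀ i ∈ Finset.Icc 1 σ.length,
            pSum σ i ≤ ∑ j ∈ Finset.univ.filter
              (fun j : Fin n => (j : ℕ) < pSum σ i), κ j),
        ∏ j : Fin n,
          if (j : ℕ) = 0 then (m + κ j).choose (κ j)
          else (m + κ j - 1).choose (κ j) := by
  have hS : partialSums σ ⊆ Icc 1 n := hsum ▸ partialSums_subset_Icc hpos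
  have hnS : n ∈ partialSums σ := hsum ▸ sum_mem_partialSums (hsum ▸ hn)
  rw [ehrCount_eq_ncard_prefixSum_lt hS, ncard_prefixSum_lt_prefixSum hS hnS]
  refine sum_congr ?_ fun κ _ ↦ prod_congr rfl fun j _ ↦ ?_
  · ext κ
    have lt_succ_of_sum_eq (hκ : ∑ j, κ j = n) (j : Fin n) : κ j < n + 1 :=
      Nat.lt_succ_iff.2 (hκ ▸ single_le_sum (fun _ _ ↦ Nat.zero_le _) (mem_univ j))
    simp only [mem_filter, mem_piAntidiag, mem_univ, implies_true, and_true,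
      forall_mem_partialSums, Fintype.mem_piFinset, mem_range, mem_Icc, and_imp]
    exact (and_iff_right_of_imp fun hκ ↦ lt_succ_of_sum_eq hκ.1).symm
  · simp only [Nat.multichoose_eq]
    split_ifs with hj
    · rw [Nat.add_right_comm, Nat.add_sub_cancel]
    · rfl
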